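/- For all real x ≠ y, (2π)^{−2} ∫_ℝ ∫_ℝ [ e^{−i((s−i)³/3 + (s−i)x)} · e^{i((t+i)³/3 + (t+i)y)} / ( i((s−i) − (t+i)) ) ] dt ds = K_Airy(x, y), where the double integral is over the horizontal lines Im z′ = −1 (variable z′ = s − i) and Im w′ = +1 (variable w′ = t + i), on which the integrand is absolutely integrable. -/

import Mathlib

open Filter Topology

/-- The Airy function `Ai(x) = (1/π) ∫₀^∞ cos(s³/3 + sx) ds`, the improper
integral being the limit of `∫₀^T` as `T → ∞`. -/
noncomputable def Ai (x : ℝ) : ℝ :=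
  (1 / Real.pi) *
    limUnder atTop fun T : ℝ => ∫ s in (0 : ℝ)..T, Real.cos (s ^ 3 / 3 + s * x)

/-- The Airy kernel `K_Airy(x, y) = (Ai(x) Ai'(y) - Ai'(x) Ai(y))/(x - y)` for
`x ≠ y`, and `K_Airy(y, y) = Ai'(y)² - y Ai(y)²` on the diagonal. -/
noncomputable def KAiry (x y : ℝ) : ℝ :=
  if x = y then (deriv Ai y) ^ 2 - y * (Ai y) ^ 2
  else (Ai x * deriv Ai y - deriv Ai x * Ai y) / (x - y)


/-- The Airy integrand. -/
noncomputable def airyE (y : ℝ) (w : ℂ) : ℂ :=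
  Complex.exp (Complex.I * (w ^ 3 / 3 + w * (y : ℂ)))

lemma airyE_norm (y a b : ℝ) :
    ‖airyE y ((a : ℂ) + (b : ℂ) * Complex.I)‖ = Real.exp (-(a ^ 2 * b - b ^ 3 / 3 + b * y)) := by
  unfold airyE
  rw [Complex.norm_exp]
  congr 1
  have h : Complex.I * (((a : ℂ) + (b : ℂ) * Complex.I) ^ 3 / 3 +
      ((a : ℂ) + (b : ℂ) * Complex.I) * (y : ℂ)) =
      ((-(a ^ 2 * b - b ^ 3 / 3 + b * y) : ℝ) : ℂ) +
        ((a ^ 3 / 3 - a * b ^ 2 + a * y : ℝ) : ℂ) * Complex.I := by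
    push_cast
    ring_nf
    simp only [show Complex.I ^ 3 = -Complex.I by rw [pow_succ, Complex.I_sq]; ring,
      show Complex.I ^ 4 = 1 from Complex.I_pow_four, Complex.I_sq]
    ring
  rw [h]
  simp only [Complex.add_re, Complex.ofReal_re, Complex.mul_re, Complex.ofReal_im, Complex.I_re,
    Complex.I_im]
  ring

lemma airyE_norm_line (y t : ℝ) :
    ‖airyE y ((t : ℂ) + Complex.I)‖ = Real.exp (1 / 3 - y) * Real.exp (-t ^ 2) := by
  have := airyE_norm y t 1
  rw [Complex.ofReal_one, one_mul] at this
  rw [this, ← Real.exp_add]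
  congr 1
  ring

lemma airyE_differentiable (y : ℝ) : Differentiable ℂ (airyE y) := by
  unfold airyE
  fun_prop

lemma airyE_hasDerivAt (y : ℝ) (w : ℂ) :
    HasDerivAt (airyE y) (Complex.I * (w ^ 2 + y) * airyE y w) w := by
  unfold airyE
  have h : HasDerivAt (fun w : ℂ => Complex.I * (w ^ 3 / 3 + w * (y : ℂ)))
      (Complex.I * (w ^ 2 + y)) w := by
    have := ((((hasDerivAt_id w).pow 3).div_const 3).add
      ((hasDerivAt_id w).mul_const (y : ℂ))).const_mul Complex.I
    refine this.congr_deriv ?_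
    simp
  refine h.cexp.congr_deriv ?_
  ring

lemma norm_line_sq (t : ℝ) : ‖(t : ℂ) + Complex.I‖ ^ 2 = t ^ 2 + 1 := by
  rw [← Complex.normSq_eq_norm_sq, Complex.normSq_apply]
  simp
  ring

lemma airy_bound (y t : ℝ) (k : ℕ) (hk : k ≤ 2) :
    ‖((t : ℂ) + Complex.I) ^ k * airyE y ((t : ℂ) + Complex.I)‖ ≤
      Real.exp (1 / 3 - y) * (2 * Real.exp (-(1 / 2) * t ^ 2)) := by
  rw [norm_mul, airyE_norm_line, norm_pow]
  have h1 : 1 ≤ ‖(t : ℂ) + Complex.I‖ := by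
    have := norm_line_sq t
    by_contra h
    push Not at h
    nlinarith [norm_nonneg ((t : ℂ) + Complex.I), sq_nonneg t]
  have h2 : ‖(t : ℂ) + Complex.I‖ ^ k ≤ t ^ 2 + 1 := by
    rw [← norm_line_sq]
    exact pow_le_pow_right₀ h1 hk
  have h3 : t ^ 2 + 1 ≤ 2 * Real.exp (t ^ 2 / 2) := by
    have := Real.add_one_le_exp (t ^ 2 / 2)
    nlinarith [sq_nonneg t]
  have h4 : Real.exp (-(1 / 2) * t ^ 2) = Real.exp (t ^ 2 / 2) * Real.exp (-t ^ 2) := by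
    rw [← Real.exp_add]
    congr 1
    ring
  rw [h4]
  have h5 := (Real.exp_pos (1 / 3 - y)).le
  have h6 := (Real.exp_pos (-t ^ 2)).le
  calc _ ≤ (2 * Real.exp (t ^ 2 / 2)) * (Real.exp (1 / 3 - y) * Real.exp (-t ^ 2)) := by
        gcongr
        exact h2.trans h3
    _ = _ := by ring

lemma airy_bound_integrable (c : ℝ) :
    MeasureTheory.Integrable (fun t : ℝ => c * (2 * Real.exp (-(1 / 2) * t ^ 2))) :=
  ((integrable_exp_neg_mul_sq (by norm_num)).const_mul _).const_mul _

lemma airyE_continuous (y : ℝ) : Continuous (airyE y) := (airyE_differentiable y).continuous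

lemma airy_integrable (y : ℝ) (k : ℕ) (hk : k ≤ 2) :
    MeasureTheory.Integrable
      (fun t : ℝ => ((t : ℂ) + Complex.I) ^ k * airyE y ((t : ℂ) + Complex.I)) := by
  refine (airy_bound_integrable (Real.exp (1 / 3 - y))).mono' ?_ ?_
  · have := airyE_continuous y
    exact Continuous.aestronglyMeasurable (by fun_prop)
  · exact Eventually.of_forall fun t => airy_bound y t k hk

/-- Side contributions vanish. -/
lemma airy_side (x : ℝ) (σ : ℝ) (hσ : σ ^ 2 = 1) :
    Tendsto (fun T : ℝ => ∫ u in (0 : ℝ)..1,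
      airyE x (((σ * T : ℝ) : ℂ) + (u : ℂ) * Complex.I)) atTop (𝓝 0) := by
  have hc := airyE_continuous x
  have key := intervalIntegral.tendsto_integral_filter_of_dominated_convergence
    (a := 0) (b := 1) (f := fun _ => (0 : ℂ)) (μ := MeasureTheory.volume) (l := atTop)
    (F := fun (T : ℝ) (u : ℝ) => airyE x (((σ * T : ℝ) : ℂ) + (u : ℂ) * Complex.I))
    (fun _ => Real.exp (1 / 3 + |x|)) ?_ ?_ ?_ ?_
  · simpa using key
  · exact Eventually.of_forall fun T => Continuous.aestronglyMeasurable (by fun_prop)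
  · refine Eventually.of_forall fun T => Eventually.of_forall fun u hu => ?_
    rw [Set.uIoc_of_le zero_le_one] at hu
    rw [airyE_norm, Real.exp_le_exp]
    have h1 : u ^ 3 ≤ 1 := pow_le_one₀ hu.1.le hu.2
    have h2 : 0 ≤ (σ * T) ^ 2 * u := mul_nonneg (sq_nonneg _) hu.1.le
    have h3 : -(u * x) ≤ |x| := by
      have := neg_abs_le x
      nlinarith [abs_nonneg x, hu.1, hu.2]
    linarith
  · exact intervalIntegrable_const
  · refine Eventually.of_forall fun u hu => ?_
    rw [Set.uIoc_of_le zero_le_one] at hu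
    rw [tendsto_zero_iff_norm_tendsto_zero]
    simp only [airyE_norm]
    refine Real.tendsto_exp_neg_atTop_nhds_zero.comp ?_
    have : (fun T : ℝ => (σ * T) ^ 2 * u - u ^ 3 / 3 + u * x) =
        fun T : ℝ => T ^ 2 * u + (- u ^ 3 / 3 + u * x) := by
      funext T
      rw [mul_pow, hσ]
      ring
    rw [this]
    exact tendsto_atTop_add_const_right _ _
      ((tendsto_pow_atTop two_ne_zero).atTop_mul_const hu.1)

lemma airy_cos (x T : ℝ) : ∫ s in (-T)..T, airyE x (s : ℂ) =
    ((2 * ∫ s in (0 : ℝ)..T, Real.cos (s ^ 3 / 3 + s * x) : ℝ) : ℂ) := by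
  have hc := airyE_continuous x
  have hi : ∀ a b : ℝ, IntervalIntegrable (fun s : ℝ => airyE x (s : ℂ))
      MeasureTheory.volume a b := fun a b => Continuous.intervalIntegrable (by fun_prop) a b
  have hi' : ∀ a b : ℝ, IntervalIntegrable (fun s : ℝ => airyE x ((-s : ℝ) : ℂ))
      MeasureTheory.volume a b := fun a b => Continuous.intervalIntegrable (by fun_prop) a b
  rw [← intervalIntegral.integral_add_adjacent_intervals (hi (-T) 0) (hi 0 T)]
  have h := intervalIntegral.integral_comp_neg (a := 0) (b := T) (fun s : ℝ => airyE x (s : ℂ))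
  rw [neg_zero] at h
  rw [← h, ← intervalIntegral.integral_add (hi' 0 T) (hi 0 T),
    ← intervalIntegral.integral_const_mul, ← intervalIntegral.integral_ofReal]
  congr 1
  funext s
  unfold airyE
  push_cast
  rw [Complex.two_cos]
  rw [add_comm]
  congr 2 <;> ring

lemma airy_tendsto (x : ℝ) :
    Tendsto (fun T : ℝ => ((2 * ∫ s in (0 : ℝ)..T, Real.cos (s ^ 3 / 3 + s * x) : ℝ) : ℂ))
      atTop (𝓝 (∫ t : ℝ, airyE x ((t : ℂ) + Complex.I))) := by
  have h0 : MeasureTheory.Integrable (fun t : ℝ => airyE x ((t : ℂ) + Complex.I)) := by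
    simpa using airy_integrable x 0 (by norm_num)
  have h1 := MeasureTheory.intervalIntegral_tendsto_integral h0 tendsto_neg_atTop_atBot
    (tendsto_id (α := ℝ))
  have h2 := (airy_side x 1 (by norm_num)).const_mul Complex.I
  have h3 := (airy_side x (-1) (by norm_num)).const_mul Complex.I
  have h4 := (h1.sub h2).add h3
  rw [mul_zero, sub_zero, add_zero] at h4
  refine h4.congr fun T => ?_
  rw [← airy_cos]
  have hr := Complex.integral_boundary_rect_eq_zero_of_differentiableOn (airyE x)
    (((-T : ℝ) : ℂ)) ((T : ℂ) + Complex.I) (airyE_differentiable x).differentiableOn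
  simp only [Complex.ofReal_re, Complex.ofReal_im, Complex.add_re, Complex.add_im, Complex.I_re,
    Complex.I_im, add_zero, zero_add, Complex.ofReal_zero, zero_mul, Complex.ofReal_one, one_mul,
    smul_eq_mul] at hr
  simp only [id, one_mul, neg_mul]
  linear_combination -hr

lemma Ai_eq (x : ℝ) :
    (Ai x : ℂ) = (2 * Real.pi : ℂ)⁻¹ * ∫ t : ℝ, airyE x ((t : ℂ) + Complex.I) := by
  set J := ∫ t : ℝ, airyE x ((t : ℂ) + Complex.I) with hJ
  have h := airy_tendsto x
  rw [← hJ] at h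
  have hre : Tendsto (fun T : ℝ => (2 * ∫ s in (0 : ℝ)..T, Real.cos (s ^ 3 / 3 + s * x)))
      atTop (𝓝 J.re) := by
    exact (Complex.continuous_re.tendsto J).comp h
  have hJr : ((J.re : ℝ) : ℂ) = J :=
    tendsto_nhds_unique ((Complex.continuous_ofReal.tendsto _).comp hre) h
  have hh : Tendsto (fun T : ℝ => (∫ s in (0 : ℝ)..T, Real.cos (s ^ 3 / 3 + s * x)))
      atTop (𝓝 (J.re / 2)) := by
    refine (hre.div_const 2).congr fun T => ?_
    ring
  unfold Ai
  rw [hh.limUnder_eq, ← hJr]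
  push_cast
  rw [Complex.ofReal_re]
  have : (Real.pi : ℂ) ≠ 0 := by exact_mod_cast Real.pi_ne_zero
  field_simp

lemma airy_hasDerivAt_int (y : ℝ) :
    HasDerivAt (fun v : ℝ => ∫ t : ℝ, airyE v ((t : ℂ) + Complex.I))
      (∫ t : ℝ, Complex.I * ((t : ℂ) + Complex.I) * airyE y ((t : ℂ) + Complex.I)) y := by
  have h0 : ∀ v, MeasureTheory.Integrable (fun t : ℝ => airyE v ((t : ℂ) + Complex.I)) := by
    intro v
    simpa using airy_integrable v 0 (by norm_num)
  have hc := airyE_continuous y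
  refine (hasDerivAt_integral_of_dominated_loc_of_deriv_le
    (F := fun (v : ℝ) (t : ℝ) => airyE v ((t : ℂ) + Complex.I))
    (F' := fun (v : ℝ) (t : ℝ) =>
      Complex.I * ((t : ℂ) + Complex.I) * airyE v ((t : ℂ) + Complex.I))
    (bound := fun t => Real.exp (1 / 3 - (y - 1)) * (2 * Real.exp (-(1 / 2) * t ^ 2)))
    (Metric.ball_mem_nhds y one_pos) (Eventually.of_forall fun v => (h0 v).1) (h0 y)
    (Continuous.aestronglyMeasurable (by fun_prop)) ?_ (airy_bound_integrable _) ?_).2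
  · refine Eventually.of_forall fun t v hv => ?_
    have hb := airy_bound v t 1 (by norm_num)
    rw [pow_one] at hb
    rw [mul_assoc, norm_mul, Complex.norm_I, one_mul]
    refine hb.trans ?_
    have : y - 1 ≤ v := by
      rw [Metric.mem_ball, Real.dist_eq, abs_lt] at hv
      linarith [hv.1]
    gcongr
  · refine Eventually.of_forall fun t v hv => ?_
    unfold airyE
    have h : HasDerivAt (fun v : ℝ => Complex.I * (((t : ℂ) + Complex.I) ^ 3 / 3 +
        ((t : ℂ) + Complex.I) * (v : ℂ))) (Complex.I * ((t : ℂ) + Complex.I)) v := by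
      have := ((((hasDerivAt_id v).ofReal_comp).const_mul ((t : ℂ) + Complex.I)).const_add
        (((t : ℂ) + Complex.I) ^ 3 / 3)).const_mul Complex.I
      simpa using this
    refine h.cexp.congr_deriv ?_
    ring

lemma deriv_Ai_eq (y : ℝ) :
    ((deriv Ai y : ℝ) : ℂ) = (2 * Real.pi : ℂ)⁻¹ *
      (Complex.I * ∫ t : ℝ, ((t : ℂ) + Complex.I) * airyE y ((t : ℂ) + Complex.I)) := by
  have h := (airy_hasDerivAt_int y).const_mul (2 * Real.pi : ℂ)⁻¹
  rw [show (fun v : ℝ => (2 * Real.pi : ℂ)⁻¹ * ∫ t : ℝ, airyE v ((t : ℂ) + Complex.I)) =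
    fun v : ℝ => (Ai v : ℂ) from funext fun v => (Ai_eq v).symm] at h
  have e : ∫ t : ℝ, Complex.I * ((t : ℂ) + Complex.I) * airyE y ((t : ℂ) + Complex.I) =
      Complex.I * ∫ t : ℝ, ((t : ℂ) + Complex.I) * airyE y ((t : ℂ) + Complex.I) := by
    rw [← MeasureTheory.integral_const_mul]
    simp only [mul_assoc]
  rw [e] at h
  set c := (2 * Real.pi : ℂ)⁻¹ *
      (Complex.I * ∫ t : ℝ, ((t : ℂ) + Complex.I) * airyE y ((t : ℂ) + Complex.I))
  have h1 : HasDerivAt Ai c.re y := by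
    have := (Complex.reCLM.hasFDerivAt (x := (Ai y : ℂ))).comp_hasDerivAt y h
    simpa [Function.comp_def] using this
  rw [h1.deriv]
  exact h1.ofReal_comp.unique h


/-- `z - w` on the two lines. -/
noncomputable def dzw (s t : ℝ) : ℂ := ((s : ℂ) - Complex.I) - ((t : ℂ) + Complex.I)

lemma dzw_norm (s t : ℝ) : 1 ≤ ‖dzw s t‖ := by
  have h := Complex.abs_im_le_norm (dzw s t)
  have : (dzw s t).im = -2 := by
    simp [dzw]
    norm_num
  rw [this] at h
  norm_num at h
  linarith

lemma dzw_ne (s t : ℝ) : dzw s t ≠ 0 := by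
  intro h
  have := dzw_norm s t
  rw [h, norm_zero] at this
  linarith

lemma dzw_cont : Continuous (fun p : ℝ × ℝ => dzw p.1 p.2) := by
  unfold dzw
  fun_prop

lemma prod_int {a b : ℝ → ℂ} (ha : MeasureTheory.Integrable a) (hb : MeasureTheory.Integrable b)
    (k : ℕ) :
    MeasureTheory.Integrable (fun p : ℝ × ℝ => (dzw p.1 p.2)⁻¹ ^ k * (a p.1 * b p.2))
      (MeasureTheory.volume.prod MeasureTheory.volume) := by
  refine (ha.mul_prod hb).bdd_mul (c := 1) ?_ ?_
  · exact ((dzw_cont.inv₀ fun p => dzw_ne _ _).pow k).aestronglyMeasurable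
  · refine Eventually.of_forall fun p => ?_
    rw [norm_pow, norm_inv]
    exact pow_le_one₀ (by positivity) (inv_le_one_of_one_le₀ (dzw_norm _ _))

lemma left_int {a : ℝ → ℂ} (ha : MeasureTheory.Integrable a) (t : ℝ) (k : ℕ) :
    MeasureTheory.Integrable (fun s : ℝ => (dzw s t)⁻¹ ^ k * a s) := by
  refine ha.bdd_mul (c := 1) ?_ ?_
  · have : Continuous fun s : ℝ => dzw s t := by unfold dzw; fun_prop
    exact ((this.inv₀ fun p => dzw_ne _ _).pow k).aestronglyMeasurable
  · refine Eventually.of_forall fun p => ?_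
    rw [norm_pow, norm_inv]
    exact pow_le_one₀ (by positivity) (inv_le_one_of_one_le₀ (dzw_norm _ _))

lemma right_int {a : ℝ → ℂ} (ha : MeasureTheory.Integrable a) (s : ℝ) (k : ℕ) :
    MeasureTheory.Integrable (fun t : ℝ => (dzw s t)⁻¹ ^ k * a t) := by
  refine ha.bdd_mul (c := 1) ?_ ?_
  · have : Continuous fun t : ℝ => dzw s t := by unfold dzw; fun_prop
    exact ((this.inv₀ fun p => dzw_ne _ _).pow k).aestronglyMeasurable
  · refine Eventually.of_forall fun p => ?_
    rw [norm_pow, norm_inv]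
    exact pow_le_one₀ (by positivity) (inv_le_one_of_one_le₀ (dzw_norm _ _))

/-- Integration by parts along the diagonal direction. -/
lemma parts {F F' G G' : ℝ → ℂ} (hF : MeasureTheory.Integrable F)
    (hF' : MeasureTheory.Integrable F') (hG : MeasureTheory.Integrable G)
    (hG' : MeasureTheory.Integrable G') (dF : ∀ s, HasDerivAt F (F' s) s)
    (dG : ∀ s, HasDerivAt G (G' s) s) :
    ∫ p : ℝ × ℝ, (dzw p.1 p.2)⁻¹ * (F' p.1 * G p.2 + F p.1 * G' p.2)
      ∂(MeasureTheory.volume.prod MeasureTheory.volume) = 0 := by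
  have i1 := prod_int hF' hG 1
  have i2 := prod_int hF hG 2
  have i3 := prod_int hF hG' 1
  have i12 : MeasureTheory.Integrable (fun p : ℝ × ℝ => (dzw p.1 p.2)⁻¹ ^ 1 * (F' p.1 * G p.2) -
      (dzw p.1 p.2)⁻¹ ^ 2 * (F p.1 * G p.2))
      (MeasureTheory.volume.prod MeasureTheory.volume) := i1.sub i2
  have i32 : MeasureTheory.Integrable (fun p : ℝ × ℝ => (dzw p.1 p.2)⁻¹ ^ 1 * (F p.1 * G' p.2) +
      (dzw p.1 p.2)⁻¹ ^ 2 * (F p.1 * G p.2))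
      (MeasureTheory.volume.prod MeasureTheory.volume) := i3.add i2
  have ds : ∀ s t : ℝ, HasDerivAt (fun s => (dzw s t)⁻¹) (-(dzw s t)⁻¹ ^ 2) s := by
    intro s t
    have h : HasDerivAt (fun s => dzw s t) 1 s := by
      unfold dzw
      simpa using (((hasDerivAt_id s).ofReal_comp).sub_const Complex.I).sub_const
        ((t : ℂ) + Complex.I)
    refine (h.fun_inv (dzw_ne s t)).congr_deriv ?_
    rw [inv_pow]
    ring
  have dt : ∀ s t : ℝ, HasDerivAt (fun t => (dzw s t)⁻¹) ((dzw s t)⁻¹ ^ 2) t := by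
    intro s t
    have h : HasDerivAt (fun t => dzw s t) (-1) t := by
      unfold dzw
      simpa using (((hasDerivAt_id t).ofReal_comp).add_const Complex.I).const_sub
        ((s : ℂ) - Complex.I)
    refine (h.fun_inv (dzw_ne s t)).congr_deriv ?_
    rw [inv_pow]
    ring
  have z1 : ∫ p : ℝ × ℝ, ((dzw p.1 p.2)⁻¹ ^ 1 * (F' p.1 * G p.2) -
      (dzw p.1 p.2)⁻¹ ^ 2 * (F p.1 * G p.2))
      ∂(MeasureTheory.volume.prod MeasureTheory.volume) = 0 := by
    rw [MeasureTheory.integral_prod_symm _ i12]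
    have : ∀ t : ℝ, ∫ s : ℝ, ((dzw s t)⁻¹ ^ 1 * (F' s * G t) -
      (dzw s t)⁻¹ ^ 2 * (F s * G t)) = 0 := by
      intro t
      refine MeasureTheory.integral_eq_zero_of_hasDerivAt_of_integrable
        (f := fun s => (dzw s t)⁻¹ ^ 1 * (F s * G t)) ?_
        ((left_int (hF'.mul_const (G t)) t 1).sub (left_int (hF.mul_const (G t)) t 2))
        (left_int (hF.mul_const (G t)) t 1)
      intro s
      simp only [pow_one]
      refine ((ds s t).mul ((dF s).mul_const (G t))).congr_deriv ?_
      ring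
    simp only [this, MeasureTheory.integral_zero]
  have z2 : ∫ p : ℝ × ℝ, ((dzw p.1 p.2)⁻¹ ^ 1 * (F p.1 * G' p.2) +
      (dzw p.1 p.2)⁻¹ ^ 2 * (F p.1 * G p.2))
      ∂(MeasureTheory.volume.prod MeasureTheory.volume) = 0 := by
    rw [MeasureTheory.integral_prod _ i32]
    have : ∀ s : ℝ, ∫ t : ℝ, ((dzw s t)⁻¹ ^ 1 * (F s * G' t) +
      (dzw s t)⁻¹ ^ 2 * (F s * G t)) = 0 := by
      intro s
      refine MeasureTheory.integral_eq_zero_of_hasDerivAt_of_integrable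
        (f := fun t => (dzw s t)⁻¹ ^ 1 * (F s * G t)) ?_
        ((right_int (hG'.const_mul (F s)) s 1).add (right_int (hG.const_mul (F s)) s 2))
        (right_int (hG.const_mul (F s)) s 1)
      intro t
      simp only [pow_one]
      refine ((dt s t).mul ((dG t).const_mul (F s))).congr_deriv ?_
      ring
    simp only [this, MeasureTheory.integral_zero]
  have z3 := MeasureTheory.integral_add i12 i32
  rw [z1, z2, add_zero] at z3
  rw [← z3]
  congr 1
  funext p
  ring

/-- The double contour integral over the horizontal lines `Im z' = -1`
(`z' = s - i`) and `Im w' = +1` (`w' = t + i`) of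
`e^{-i(z'³/3 + z'x)} e^{i(w'³/3 + w'y)} / (i(z' - w'))`, times `(2π)^{-2}`,
equals the Airy kernel `K_Airy(x, y)`. -/
theorem double_integral_eq_airy_kernel (x y : ℝ) (hxy : x ≠ y) :
    (((2 * Real.pi)⁻¹ ^ 2 : ℝ) : ℂ) *
        ∫ s : ℝ, ∫ t : ℝ,
          Complex.exp (-Complex.I *
              (((s : ℂ) - Complex.I) ^ 3 / 3 + ((s : ℂ) - Complex.I) * (x : ℂ))) *
            Complex.exp (Complex.I *
              (((t : ℂ) + Complex.I) ^ 3 / 3 + ((t : ℂ) + Complex.I) * (y : ℂ))) /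
            (Complex.I * (((s : ℂ) - Complex.I) - ((t : ℂ) + Complex.I)))
      = ((KAiry x y : ℝ) : ℂ) := by
  have hG : ∀ v : ℝ, MeasureTheory.Integrable (fun t : ℝ => airyE v ((t : ℂ) + Complex.I)) := by
    intro v
    simpa using airy_integrable v 0 (by norm_num)
  have hwG : ∀ v : ℝ, MeasureTheory.Integrable
      (fun t : ℝ => ((t : ℂ) + Complex.I) * airyE v ((t : ℂ) + Complex.I)) := by
    intro v
    simpa using airy_integrable v 1 (by norm_num)
  have hG' : ∀ v : ℝ, MeasureTheory.Integrable
      (fun t : ℝ => Complex.I * (((t : ℂ) + Complex.I) ^ 2 + v) *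
        airyE v ((t : ℂ) + Complex.I)) := by
    intro v
    refine (((airy_integrable v 2 le_rfl).add ((hG v).const_mul (v : ℂ))).const_mul
      Complex.I).congr (Eventually.of_forall fun t => ?_)
    simp only [Pi.add_apply]
    ring
  have dG : ∀ v t : ℝ, HasDerivAt (fun t : ℝ => airyE v ((t : ℂ) + Complex.I))
      (Complex.I * (((t : ℂ) + Complex.I) ^ 2 + v) * airyE v ((t : ℂ) + Complex.I)) t := by
    intro v t
    have h1 : HasDerivAt (fun t : ℝ => (t : ℂ) + Complex.I) 1 t := by
      simpa using ((hasDerivAt_id t).ofReal_comp).add_const Complex.I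
    have h2 := (airyE_hasDerivAt v ((t : ℂ) + Complex.I)).comp t h1
    simpa [Function.comp_def] using h2
  have dF : ∀ s : ℝ, HasDerivAt (fun s : ℝ => airyE x (((-s : ℝ) : ℂ) + Complex.I))
      (-(Complex.I * ((((-s : ℝ) : ℂ) + Complex.I) ^ 2 + x) *
        airyE x (((-s : ℝ) : ℂ) + Complex.I))) s := by
    intro s
    have := (dG x (-s)).scomp s (hasDerivAt_neg s)
    simpa [Function.comp_def] using this
  have hF := (hG x).comp_neg
  have hzF := (hwG x).comp_neg
  have hP := parts hF (hG' x).comp_neg.neg (hG y) (hG' y) dF (dG y)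
  have iI := prod_int hF (hG y) 1
  have e1 := MeasureTheory.integral_prod_mul (μ := MeasureTheory.volume)
    (ν := MeasureTheory.volume)
    (fun s : ℝ => (((-s : ℝ) : ℂ) + Complex.I) * airyE x (((-s : ℝ) : ℂ) + Complex.I))
    (fun t : ℝ => airyE y ((t : ℂ) + Complex.I))
  have e2 := MeasureTheory.integral_prod_mul (μ := MeasureTheory.volume)
    (ν := MeasureTheory.volume)
    (fun s : ℝ => airyE x (((-s : ℝ) : ℂ) + Complex.I))
    (fun t : ℝ => ((t : ℂ) + Complex.I) * airyE y ((t : ℂ) + Complex.I))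
  have i1 := hzF.mul_prod (hG y)
  have i2 := hF.mul_prod (hwG y)
  have i12 : MeasureTheory.Integrable (fun p : ℝ × ℝ =>
      ((((-p.1 : ℝ) : ℂ) + Complex.I) * airyE x (((-p.1 : ℝ) : ℂ) + Complex.I)) *
        airyE y ((p.2 : ℂ) + Complex.I) - airyE x (((-p.1 : ℝ) : ℂ) + Complex.I) *
        (((p.2 : ℂ) + Complex.I) * airyE y ((p.2 : ℂ) + Complex.I)))
      (MeasureTheory.volume.prod MeasureTheory.volume) := i1.sub i2
  rw [MeasureTheory.integral_neg_eq_self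
    (fun s : ℝ => ((s : ℂ) + Complex.I) * airyE x ((s : ℂ) + Complex.I))] at e1
  rw [MeasureTheory.integral_neg_eq_self
    (fun s : ℝ => airyE x ((s : ℂ) + Complex.I))] at e2
  have hL : ∫ s : ℝ, ∫ t : ℝ,
          Complex.exp (-Complex.I *
              (((s : ℂ) - Complex.I) ^ 3 / 3 + ((s : ℂ) - Complex.I) * (x : ℂ))) *
            Complex.exp (Complex.I *
              (((t : ℂ) + Complex.I) ^ 3 / 3 + ((t : ℂ) + Complex.I) * (y : ℂ))) /
            (Complex.I * (((s : ℂ) - Complex.I) - ((t : ℂ) + Complex.I))) =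
      -Complex.I * ∫ p : ℝ × ℝ, (dzw p.1 p.2)⁻¹ ^ 1 *
        (airyE x (((-p.1 : ℝ) : ℂ) + Complex.I) * airyE y ((p.2 : ℂ) + Complex.I))
        ∂(MeasureTheory.volume.prod MeasureTheory.volume) := by
    rw [← MeasureTheory.integral_const_mul, MeasureTheory.integral_prod _ (iI.const_mul _)]
    congr 1
    funext s
    congr 1
    funext t
    have hx : airyE x (((-s : ℝ) : ℂ) + Complex.I) = Complex.exp (-Complex.I *
        (((s : ℂ) - Complex.I) ^ 3 / 3 + ((s : ℂ) - Complex.I) * (x : ℂ))) := by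
      unfold airyE
      congr 1
      push_cast
      ring
    simp only [hx]
    unfold airyE dzw
    rw [div_eq_mul_inv, mul_inv, Complex.inv_I]
    ring
  rw [hL]
  set Q := ∫ p : ℝ × ℝ, (dzw p.1 p.2)⁻¹ ^ 1 *
        (airyE x (((-p.1 : ℝ) : ℂ) + Complex.I) * airyE y ((p.2 : ℂ) + Complex.I))
        ∂(MeasureTheory.volume.prod MeasureTheory.volume) with hQ
  have hcomb : Complex.I * ((y - x : ℂ) * Q) + Complex.I *
      ((∫ p : ℝ × ℝ, ((((-p.1 : ℝ) : ℂ) + Complex.I) * airyE x (((-p.1 : ℝ) : ℂ) + Complex.I)) *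
        airyE y ((p.2 : ℂ) + Complex.I)
        ∂(MeasureTheory.volume.prod MeasureTheory.volume)) -
      ∫ p : ℝ × ℝ, airyE x (((-p.1 : ℝ) : ℂ) + Complex.I) *
        (((p.2 : ℂ) + Complex.I) * airyE y ((p.2 : ℂ) + Complex.I))
        ∂(MeasureTheory.volume.prod MeasureTheory.volume)) = 0 := by
    rw [← hP, hQ, ← MeasureTheory.integral_sub i1 i2, ← MeasureTheory.integral_const_mul,
      ← MeasureTheory.integral_const_mul, ← MeasureTheory.integral_const_mul,
      ← MeasureTheory.integral_add ((iI.const_mul _).const_mul _) (i12.const_mul _)]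
    congr 1
    funext p
    have hd := dzw_ne p.1 p.2
    have hd' : dzw p.1 p.2 = -(((-p.1 : ℝ) : ℂ) + Complex.I) - ((p.2 : ℂ) + Complex.I) := by
      unfold dzw
      push_cast
      ring
    simp only [Pi.neg_apply, pow_one]
    generalize dzw p.1 p.2 = d at hd hd'
    generalize airyE x (((-p.1 : ℝ) : ℂ) + Complex.I) = f
    generalize airyE y ((p.2 : ℂ) + Complex.I) = g
    generalize ((-p.1 : ℝ) : ℂ) + Complex.I = m at hd' ⊢
    generalize (p.2 : ℂ) + Complex.I = w at hd' ⊢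
    field_simp
    rw [hd']
    ring
  rw [e1, e2] at hcomb
  have hne : (x - y : ℂ) ≠ 0 := by
    rw [sub_ne_zero]
    exact_mod_cast hxy
  unfold KAiry
  rw [if_neg hxy]
  push_cast
  rw [Ai_eq, Ai_eq, deriv_Ai_eq, deriv_Ai_eq, eq_div_iff hne]
  linear_combination ((2 * Real.pi : ℂ)⁻¹) ^ 2 * hcomb
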